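/- (Claim 2.3) Let F be a finite alphabet and E : Fⁿ → F^N (n, N ≥ 1) an error correcting code with relative distance 1 − μ, i.e., for all x ≠ x' in Fⁿ, |{j ∈ [N] : E(x)_j = E(x')_j}| ≤ μN. Let τ > 0, let w : [N] → F, and let W : [N] → Fⁿ ∪ {⊥} be the τ-local decoding function of w with respect to E: W(j) = x if x is the unique element of agr_τ(w) with E(x)_j = w_j, and W(j) = ⊥ otherwise. Suppose v : [N] → F is a codeword, v = E(y) for some y ∈ Fⁿ. Then |{j ∈ [N] : v_j = w_j and W(j) ≠ y}| ≤ (τ + 4μ/τ²)·N. -/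

import Mathlib

/-- The set of `τ`-admissible words for `w` with respect to the code `E`:
all messages `x` whose encoding agrees with `w` on at least a `τ` fraction
of the `N` coordinates. -/
def agrSet {F : Type*} {n N : ℕ} (E : (Fin n → F) → (Fin N → F)) (τ : ℝ)
    (w : Fin N → F) : Set (Fin n → F) :=
  {x | τ * N ≤ (({j : Fin N | E x j = w j} : Set (Fin N)).ncard : ℝ)}

/-!
If `y` is not `τ`-admissible, then `E y` agrees with `w` on less than a `τ` fraction of the
coordinates. If it is, every coordinate of the agreement at which `W` misses `y` is one where a
second admissible word `x` has `E x j = w j = E y j`, and a union bound over the admissible words,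
`L` in number, leaves at most an `L * μ` fraction. To bound `L`, note that the sets
`{j | E x j = w j}`, for admissible `x`, have density at least `τ` and pairwise intersections of
density at most `μ`. Corrádi's inequality for finitely many such sets gives `L * (τ ^ 2 - μ) ≤ τ`,
and in particular finiteness of the list when `μ < τ ^ 2`. The claim is trivial unless `τ < 1` and
`4 * μ < τ ^ 2`, and then `L ≤ 4 / τ ^ 2`.
-/

section Corradi

open Finset

variable {α ι : Type*} [DecidableEq ι]

theorem sum_card_inter_le_of_pairwise {A : Finset α} {S : α → Finset ι} {k : ℝ}
    (hk : (A : Set α).Pairwise fun a b ↦ (#(S a ∩ S b) : ℝ) ≤ k) :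
    ∑ a ∈ A, ∑ b ∈ A, (#(S a ∩ S b) : ℝ) ≤ ∑ a ∈ A, (#(S a) : ℝ) + #A * ((#A - 1) * k) := by
  classical
  rw [← nsmul_eq_mul, ← sum_const, ← sum_add_distrib]
  refine sum_le_sum fun a ha ↦ ?_
  rw [← add_sum_erase A _ ha, inter_self]
  have off_diagonal : ∑ b ∈ A.erase a, (#(S a ∩ S b) : ℝ) ≤ #(A.erase a) • k :=
    sum_le_card_nsmul _ _ _ fun b hb ↦
      hk ha (mem_of_mem_erase hb) (ne_of_mem_erase hb).symm
  rw [nsmul_eq_mul, cast_card_erase_of_mem ha] at off_diagonal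
  gcongr

variable [Fintype ι]

theorem sum_card_eq_sum_card_filter_mem (A : Finset α) (S : α → Finset ι) :
    ∑ a ∈ A, #(S a) = ∑ j, #{a ∈ A | j ∈ S a} := by
  simpa [bipartiteAbove, bipartiteBelow] using
    sum_card_bipartiteAbove_eq_sum_card_bipartiteBelow (fun a j ↦ j ∈ S a) (s := A) (t := univ)

theorem sum_card_inter_eq_sum_sq_card_filter_mem (A : Finset α) (S : α → Finset ι) :
    ∑ a ∈ A, ∑ b ∈ A, #(S a ∩ S b) = ∑ j, #{a ∈ A | j ∈ S a} ^ 2 := by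
  rw [← sum_product', sum_card_eq_sum_card_filter_mem (A ×ˢ A) fun p ↦ S p.1 ∩ S p.2]
  refine sum_congr rfl fun j _ ↦ ?_
  simp only [mem_inter, filter_product (fun a ↦ j ∈ S a) (fun b ↦ j ∈ S b), card_product, sq]

theorem sq_sum_card_le_card_mul_sum_card_inter (A : Finset α) (S : α → Finset ι) :
    (∑ a ∈ A, #(S a)) ^ 2 ≤ Fintype.card ι * ∑ a ∈ A, ∑ b ∈ A, #(S a ∩ S b) := by
  rw [sum_card_eq_sum_card_filter_mem, sum_card_inter_eq_sum_sq_card_filter_mem]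
  exact sq_sum_le_card_mul_sum_sq

theorem corradi_inequality {A : Finset α} (hA : A.Nonempty) {S : α → Finset ι} {r k : ℝ}
    (hr₀ : 0 ≤ r) (hk₀ : 0 ≤ k) (hr : ∀ a ∈ A, r ≤ #(S a))
    (hk : (A : Set α).Pairwise fun a b ↦ (#(S a ∩ S b) : ℝ) ≤ k) :
    #A * r ^ 2 ≤ Fintype.card ι * (r + (#A - 1) * k) := by
  have cauchy_schwarz : (∑ a ∈ A, (#(S a) : ℝ)) ^ 2 ≤
      Fintype.card ι * ∑ a ∈ A, ∑ b ∈ A, (#(S a ∩ S b) : ℝ) := by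
    exact_mod_cast sq_sum_card_le_card_mul_sum_card_inter A S
  set L : ℝ := (#A : ℝ)
  set N : ℝ := (Fintype.card ι : ℝ)
  set s : ℝ := ∑ a ∈ A, (#(S a) : ℝ)
  have one_le_L : 1 ≤ L := Nat.one_le_cast.2 hA.card_pos
  have N_nonneg : 0 ≤ N := Nat.cast_nonneg _
  have excess_nonneg : 0 ≤ N * ((L - 1) * k) :=
    mul_nonneg N_nonneg (mul_nonneg (sub_nonneg.2 one_le_L) hk₀)
  have le_s : L * r ≤ s := by
    simpa only [nsmul_eq_mul] using card_nsmul_le_sum A (fun a ↦ (#(S a) : ℝ)) r hr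
  have sq_s_le : s ^ 2 ≤ N * (s + L * ((L - 1) * k)) :=
    cauchy_schwarz.trans (mul_le_mul_of_nonneg_left (sum_card_inter_le_of_pairwise hk) N_nonneg)
  -- `s ↦ s * (s - N)` is increasing only beyond `N / 2`, hence the case distinction.
  rcases le_total (L * r) N with small | large
  · nlinarith [mul_le_mul_of_nonneg_right small hr₀]
  · have mono : L * r * (L * r - N) ≤ s * (s - N) :=
      mul_le_mul le_s (by gcongr) (sub_nonneg.2 large) (by positivity)
    have scaled : L * (L * r ^ 2) ≤ L * (N * (r + (L - 1) * k)) := by linarith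
    exact le_of_mul_le_mul_left scaled (by linarith)

end Corradi

section LocalDecoding

open Finset

variable {M ι F : Type*} [Fintype ι] {E : M → ι → F} {μ τ : ℝ} {w : ι → F}

/-- The code `E` has relative distance at least `1 - μ`: distinct codewords agree on at most a `μ`
fraction of the coordinates, where the number of agreements is compared with `μ * Fintype.card ι` to
avoid dividing. -/
def PairwiseAgreementLE (E : M → ι → F) (μ : ℝ) : Prop :=
  Pairwise fun x x' ↦ ({j | E x j = E x' j}.ncard : ℝ) ≤ μ * Fintype.card ι

/-- The `τ`-admissible words for `w`, that is `agrSet` for codes with an arbitrary type of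
messages and an arbitrary finite type of coordinates. -/
def admissibleSet (E : M → ι → F) (τ : ℝ) (w : ι → F) : Set M :=
  {x | τ * Fintype.card ι ≤ ({j | E x j = w j}.ncard : ℝ)}

/-- `W` is the `τ`-local decoding function of `w`, with `none` in the role of `⊥`. -/
def IsLocalDecoding (E : M → ι → F) (τ : ℝ) (w : ι → F) (W : ι → Option M) : Prop :=
  ∀ j x, W j = some x ↔ x ∈ admissibleSet E τ w ∧ E x j = w j ∧
    ∀ x' ∈ admissibleSet E τ w, E x' j = w j → x' = x

theorem card_mul_sq_sub_le_of_subset_admissibleSet [Nonempty ι] (hμ : 0 ≤ μ) (hτ : 0 ≤ τ)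
    (hE : PairwiseAgreementLE E μ) {A : Finset M} (hA : ↑A ⊆ admissibleSet E τ w) :
    #A * (τ ^ 2 - μ) ≤ τ := by
  classical
  rcases A.eq_empty_or_nonempty with rfl | hne
  · simpa using hτ
  set N : ℝ := (Fintype.card ι : ℝ)
  have N_pos : 0 < N := Nat.cast_pos.2 Fintype.card_pos
  let S (x : M) : Finset ι := {j | E x j = w j}
  have density (x : M) (hx : x ∈ A) : τ * N ≤ #(S x) := by
    simpa [admissibleSet, S, ← Set.ncard_coe_finset] using hA hx
  have overlap : (A : Set M).Pairwise fun x x' ↦ (#(S x ∩ S x') : ℝ) ≤ μ * N := by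
    intro x _ x' _ hxx'
    refine le_trans (Nat.cast_le.2 ?_) (hE hxx')
    rw [← Set.ncard_coe_finset]
    refine Set.ncard_le_ncard fun j hj ↦ ?_
    simp only [S, coe_inter, coe_filter_univ, Set.mem_inter_iff, Set.mem_ofPred_eq] at hj
    exact hj.1.trans hj.2.symm
  have corradi := corradi_inequality hne (by positivity) (by positivity) density overlap
  have scaled : N ^ 2 * (#A * τ ^ 2) ≤ N ^ 2 * (τ + (#A - 1) * μ) := by linarith
  linarith [le_of_mul_le_mul_left scaled (pow_pos N_pos 2)]

theorem finite_admissibleSet [Nonempty ι] (hμ : 0 ≤ μ) (hτ : 0 ≤ τ) (hμτ : μ < τ ^ 2)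
    (hE : PairwiseAgreementLE E μ) : (admissibleSet E τ w).Finite := by
  by_contra infinite
  obtain ⟨m, hm⟩ := exists_lt_nsmul (sub_pos.2 hμτ) τ
  obtain ⟨A, hA, rfl⟩ := Set.Infinite.exists_subset_card_eq infinite m
  rw [nsmul_eq_mul] at hm
  exact hm.not_ge (card_mul_sq_sub_le_of_subset_admissibleSet hμ hτ hE hA)

theorem ncard_admissibleSet_le_div [Nonempty ι] (hμ : 0 ≤ μ) (hτ : 0 ≤ τ) (hμτ : μ < τ ^ 2)
    (hE : PairwiseAgreementLE E μ) : ((admissibleSet E τ w).ncard : ℝ) ≤ τ / (τ ^ 2 - μ) := by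
  have hfin : (admissibleSet E τ w).Finite := finite_admissibleSet hμ hτ hμτ hE
  rw [le_div_iff₀ (sub_pos.2 hμτ), Set.ncard_eq_toFinset_card _ hfin]
  exact card_mul_sq_sub_le_of_subset_admissibleSet hμ hτ hE hfin.coe_toFinset.subset

theorem ncard_competitors_le (hμ : 0 ≤ μ) (hE : PairwiseAgreementLE E μ) {A : Set M}
    (hA : A.Finite) (y : M) :
    ({j | ∃ x ∈ A, x ≠ y ∧ E x j = E y j}.ncard : ℝ) ≤ A.ncard * (μ * Fintype.card ι) := by
  classical
  lift A to Finset M using hA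
  have eq_biUnion : {j | ∃ x ∈ (A : Set M), x ≠ y ∧ E x j = E y j} =
      ⋃ x ∈ A.erase y, {j | E x j = E y j} := by
    ext j
    simp only [Set.mem_ofPred_eq, mem_coe, Set.mem_iUnion, mem_erase]
    grind
  rw [eq_biUnion, Set.ncard_coe_finset]
  calc ((⋃ x ∈ A.erase y, {j | E x j = E y j}).ncard : ℝ)
      ≤ ∑ x ∈ A.erase y, ({j | E x j = E y j}.ncard : ℝ) := by
        exact_mod_cast set_ncard_biUnion_le _ _
    _ ≤ #(A.erase y) • (μ * Fintype.card ι) :=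
        sum_le_card_nsmul _ _ _ fun x hx ↦ hE (ne_of_mem_erase hx)
    _ ≤ #A * (μ * Fintype.card ι) := by
        rw [nsmul_eq_mul]
        gcongr
        exact erase_subset y A

theorem IsLocalDecoding.exists_competitor {W : ι → Option M} (hW : IsLocalDecoding E τ w W)
    {y : M} (hy : y ∈ admissibleSet E τ w) {j : ι} (hyj : E y j = w j) (hWj : W j ≠ some y) :
    ∃ x ∈ admissibleSet E τ w, x ≠ y ∧ E x j = E y j := by
  by_contra! unique
  refine hWj ((hW j y).2 ⟨hy, hyj, fun x hx hxj ↦ ?_⟩)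
  by_contra hxy
  exact unique x hx hxy (hxj.trans hyj.symm)

theorem IsLocalDecoding.ncard_agree_and_ne_le (hμ : 0 ≤ μ) (hτ : 0 ≤ τ)
    (hE : PairwiseAgreementLE E μ) (hfin : (admissibleSet E τ w).Finite) {W : ι → Option M}
    (hW : IsLocalDecoding E τ w W) (y : M) :
    ({j | E y j = w j ∧ W j ≠ some y}.ncard : ℝ) ≤
      (τ + (admissibleSet E τ w).ncard * μ) * Fintype.card ι := by
  rw [add_mul, mul_assoc]
  by_cases hy : y ∈ admissibleSet E τ w
  · have subset_competitors : {j | E y j = w j ∧ W j ≠ some y} ⊆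
        {j | ∃ x ∈ admissibleSet E τ w, x ≠ y ∧ E x j = E y j} :=
      fun j hj ↦ hW.exists_competitor hy hj.1 hj.2
    calc ({j | E y j = w j ∧ W j ≠ some y}.ncard : ℝ)
        ≤ ({j | ∃ x ∈ admissibleSet E τ w, x ≠ y ∧ E x j = E y j}.ncard : ℝ) :=
          Nat.cast_le.2 (Set.ncard_le_ncard subset_competitors)
      _ ≤ (admissibleSet E τ w).ncard * (μ * Fintype.card ι) := ncard_competitors_le hμ hE hfin y
      _ ≤ _ := le_add_of_nonneg_left (by positivity)
  · calc ({j | E y j = w j ∧ W j ≠ some y}.ncard : ℝ)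
        ≤ ({j | E y j = w j}.ncard : ℝ) :=
          Nat.cast_le.2 (Set.ncard_le_ncard fun j hj ↦ hj.1)
      _ ≤ τ * Fintype.card ι := (not_le.1 hy).le
      _ ≤ _ := le_add_of_nonneg_right (by positivity)

theorem stmt3_general [Nonempty ι] (hμ : 0 ≤ μ) (hE : PairwiseAgreementLE E μ) (hτ : 0 < τ)
    {W : ι → Option M} (hW : IsLocalDecoding E τ w W) (y : M) :
    ({j | E y j = w j ∧ W j ≠ some y}.ncard : ℝ) ≤ (τ + 4 * μ / τ ^ 2) * Fintype.card ι := by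
  rcases le_or_gt 1 (τ + 4 * μ / τ ^ 2) with trivial_bound | bound_lt_one
  · calc ({j | E y j = w j ∧ W j ≠ some y}.ncard : ℝ)
        ≤ Fintype.card ι := by
          exact_mod_cast (Set.ncard_le_card _).trans_eq Nat.card_eq_fintype_card
      _ ≤ _ := le_mul_of_one_le_left (Nat.cast_nonneg _) trivial_bound
  have quotient_nonneg : 0 ≤ 4 * μ / τ ^ 2 := by positivity
  have τ_lt_one : τ < 1 := by linarith
  have hμτ : 4 * μ < τ ^ 2 := (div_lt_one (by positivity)).1 (by linarith)
  have hμ_lt : μ < τ ^ 2 := by linarith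
  have list_size_le : ((admissibleSet E τ w).ncard : ℝ) ≤ 4 / τ ^ 2 := by
    refine (ncard_admissibleSet_le_div hμ hτ.le hμ_lt hE).trans ?_
    rw [div_le_div_iff₀ (sub_pos.2 hμ_lt) (by positivity)]
    linarith [mul_le_of_le_one_left (sq_nonneg τ) τ_lt_one.le]
  calc ({j | E y j = w j ∧ W j ≠ some y}.ncard : ℝ)
      ≤ (τ + (admissibleSet E τ w).ncard * μ) * Fintype.card ι :=
        hW.ncard_agree_and_ne_le hμ hτ.le hE (finite_admissibleSet hμ hτ.le hμ_lt hE) y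
    _ ≤ (τ + 4 / τ ^ 2 * μ) * Fintype.card ι := by gcongr
    _ = (τ + 4 * μ / τ ^ 2) * Fintype.card ι := by rw [div_mul_eq_mul_div]

end LocalDecoding

/-- Claim 2.3: if `E : Fⁿ → F^N` has relative distance `1 − μ`, `τ > 0`,
`W` is the `τ`-local decoding function of `w` (mapping `j` to the unique
`τ`-admissible message agreeing with `w` at `j`, or `⊥` if no unique such
message exists), and `v = E y` is a codeword, then the fraction of indices `j`
where `v_j = w_j` yet `W(j) ≠ y` is at most `τ + 4μ/τ²`. -/
theorem stmt3 (F : Type*) [Fintype F] (n N : ℕ) (hn : 1 ≤ n) (hN : 1 ≤ N)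
    (E : (Fin n → F) → (Fin N → F)) (μ τ : ℝ) (hμ : 0 ≤ μ)
    (hdist : ∀ x x' : Fin n → F, x ≠ x' →
      (({j : Fin N | E x j = E x' j} : Set (Fin N)).ncard : ℝ) ≤ μ * N)
    (hτpos : 0 < τ)
    (w : Fin N → F) (W : Fin N → Option (Fin n → F))
    (hW : ∀ (j : Fin N) (x : Fin n → F), W j = some x ↔
      (x ∈ agrSet E τ w ∧ E x j = w j ∧
        ∀ x' ∈ agrSet E τ w, E x' j = w j → x' = x))
    (y : Fin n → F) :
    (({j : Fin N | E y j = w j ∧ W j ≠ some y} : Set (Fin N)).ncard : ℝ)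
      ≤ (τ + 4 * μ / τ ^ 2) * N := by
  have : NeZero N := ⟨by lia⟩
  simpa using stmt3_general (E := E) hμ (by simpa [PairwiseAgreementLE, Pairwise] using hdist) hτpos
    (by simpa [IsLocalDecoding, admissibleSet, agrSet] using hW) y
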